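/- Let f : V' → V be a homomorphism of abelian groups whose cokernel is killed by a positive integer n₁. Suppose V' decomposes as an internal direct sum V' = D' ⊕ T', where D' is a divisible subgroup and T' is killed by a positive integer n₂. Then V decomposes as an internal direct sum V = D ⊕ T, where D = f(D') is a divisible subgroup of V and T is a subgroup killed by n₁·n₂. (This is the core of the paper's proof that V(C/k) = D ⊕ T with D divisible and T of finite exponent, for a geometrically irreducible projective integral curve C over a local field.) -/

import Mathlib

/-!
A divisible subgroup `D` is an injective `ℤ`-module, so it has a complement. If moreover
`n • V ⊆ D`, then `n` kills every subgroup `T` disjoint from `D`, because `n • T ⊆ D ∩ T`. For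
`D = f(D')`, the inclusions `n₁ • V ⊆ f(V')` and `n₂ • V' ⊆ D'` compose to `(n₁ * n₂) • V ⊆ D`.
-/

theorem exists_isCompl_of_baer {R M : Type*} [Ring R] [AddCommGroup M] [Module R M]
    {p : Submodule R M} (hp : Module.Baer R p) : ∃ q : Submodule R M, IsCompl p q := by
  obtain ⟨r, hr⟩ := hp.extension_property p.subtype p.subtype_injective LinearMap.id
  exact ⟨r.ker, LinearMap.isCompl_of_proj (LinearMap.congr_fun hr)⟩

theorem exists_isCompl_of_divisibleBy {A : Type*} [AddCommGroup A] (D : AddSubgroup A)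
    [DivisibleBy D ℤ] : ∃ T : AddSubgroup A, IsCompl D T := by
  obtain ⟨q, hq⟩ := exists_isCompl_of_baer (p := D.toIntSubmodule) (Module.Baer.of_divisible D)
  exact ⟨q.toAddSubgroup, AddSubgroup.toIntSubmodule.isCompl_iff.2 hq⟩

/-- A subgroup `D` is divisible if multiplication by each positive integer maps `D` onto itself.
This is the propositional form of Mathlib's `DivisibleBy D ℕ`, which carries a choice of
quotients. -/
def IsDivisible {A : Type*} [AddGroup A] (D : AddSubgroup A) : Prop :=
  ∀ d ∈ D, ∀ n : ℕ, 0 < n → ∃ e ∈ D, n • e = d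

namespace IsDivisible

theorem map {A B : Type*} [AddGroup A] [AddGroup B] {D : AddSubgroup A} (hD : IsDivisible D)
    (f : A →+ B) : IsDivisible (D.map f) := by
  rintro _ ⟨d, hd, rfl⟩ n hn
  obtain ⟨e, he, rfl⟩ := hD d hd n hn
  exact ⟨f e, AddSubgroup.mem_map_of_mem f he, (map_nsmul f n e).symm⟩

theorem smul_surjective {A : Type*} [AddGroup A] {D : AddSubgroup A} (hD : IsDivisible D)
    {n : ℕ} (hn : n ≠ 0) : Function.Surjective fun d : D => n • d := by
  rintro ⟨d, hd⟩
  obtain ⟨e, he, hed⟩ := hD d hd n (Nat.pos_of_ne_zero hn)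
  exact ⟨⟨e, he⟩, Subtype.ext hed⟩

theorem exists_isCompl {A : Type*} [AddCommGroup A] {D : AddSubgroup A} (hD : IsDivisible D) :
    ∃ T : AddSubgroup A, IsCompl D T := by
  let : DivisibleBy D ℕ := divisibleByOfSMulRightSurj D ℕ hD.smul_surjective
  let : DivisibleBy D ℤ := AddGroup.divisibleByIntOfDivisibleByNat D
  exact exists_isCompl_of_divisibleBy D

end IsDivisible

theorem nsmul_eq_zero_of_disjoint {A : Type*} [AddGroup A] {D T : AddSubgroup A}
    (hDT : Disjoint D T) {n : ℕ} (hn : ∀ a : A, n • a ∈ D) {t : A} (ht : t ∈ T) : n • t = 0 :=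
  AddSubgroup.disjoint_def.1 hDT (hn t) (T.nsmul_mem ht n)

theorem nsmul_mem_of_codisjoint {A : Type*} [AddCommGroup A] {D T : AddSubgroup A}
    (hDT : Codisjoint D T) {n : ℕ} (hT : ∀ t ∈ T, n • t = 0) (a : A) : n • a ∈ D := by
  obtain ⟨d, hd, t, ht, rfl⟩ := AddSubgroup.mem_sup.1 (hDT.eq_top ▸ AddSubgroup.mem_top a)
  rw [nsmul_add, hT t ht, add_zero]
  exact D.nsmul_mem hd n

theorem mul_nsmul_mem_map {A B : Type*} [AddGroup A] [AddGroup B] (f : A →+ B)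
    {D : AddSubgroup A} {m n : ℕ} (hf : ∀ b : B, m • b ∈ f.range) (hD : ∀ a : A, n • a ∈ D)
    (b : B) : (m * n) • b ∈ D.map f := by
  obtain ⟨a, ha⟩ := hf b
  rw [mul_nsmul, ← ha, ← map_nsmul]
  exact AddSubgroup.mem_map_of_mem f (hD a)

theorem stmt_6_general {V' V : Type*} [AddCommGroup V'] [AddCommGroup V] (f : V' →+ V)
    {n₁ n₂ : ℕ} (hcoker : ∀ v : V, n₁ • v ∈ f.range) {D' : AddSubgroup V'}
    (hdiv : IsDivisible D') (hquot : ∀ v : V', n₂ • v ∈ D') :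
    IsDivisible (D'.map f) ∧
      ∃ T : AddSubgroup V, IsCompl (D'.map f) T ∧ ∀ t ∈ T, (n₁ * n₂) • t = 0 := by
  have hD : IsDivisible (D'.map f) := hdiv.map f
  obtain ⟨T, hT⟩ := hD.exists_isCompl
  have hVD : ∀ v : V, (n₁ * n₂) • v ∈ D'.map f := mul_nsmul_mem_map f hcoker hquot
  exact ⟨hD, T, hT, fun _ ht => nsmul_eq_zero_of_disjoint hT.disjoint hVD ht⟩

/-- Let `f : V' → V` be a homomorphism of abelian groups whose cokernel is
killed by a positive integer `n₁`. Suppose `V' = D' ⊕ T'` (an internal direct sum) with `D'`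
a divisible subgroup and `T'` killed by a positive integer `n₂`. Then `V = D ⊕ T` (an internal
direct sum), where `D = f(D')` is a divisible subgroup of `V` and `T` is a subgroup killed by
`n₁·n₂`. -/
theorem stmt_6 {V' V : Type*} [AddCommGroup V'] [AddCommGroup V]
    (f : V' →+ V) (n₁ n₂ : ℕ) (hn₁ : 0 < n₁) (hn₂ : 0 < n₂)
    (hcoker : ∀ v : V, n₁ • v ∈ f.range)
    (D' T' : AddSubgroup V')
    (hint : D' ⊓ T' = ⊥) (hsum : D' ⊔ T' = ⊤)
    (hdiv : ∀ d ∈ D', ∀ n : ℕ, 0 < n → ∃ e ∈ D', n • e = d)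
    (hT' : ∀ t ∈ T', n₂ • t = 0) :
    -- `D = f(D')` is divisible:
    (∀ d ∈ D'.map f, ∀ n : ℕ, 0 < n → ∃ e ∈ D'.map f, n • e = d) ∧
    -- and it admits a complement `T` killed by `n₁·n₂`:
    ∃ T : AddSubgroup V, D'.map f ⊓ T = ⊥ ∧ D'.map f ⊔ T = ⊤ ∧
      ∀ t ∈ T, (n₁ * n₂) • t = 0 := by
  obtain ⟨hD, T, hT, hTkill⟩ :=
    stmt_6_general f hcoker hdiv (nsmul_mem_of_codisjoint (codisjoint_iff.2 hsum) hT')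
  exact ⟨hD, T, hT.inf_eq_bot, hT.sup_eq_top, hTkill⟩
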